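/- Let F = {f_i}_{i∈I} be a Parseval K-frame for H. Then for every J ⊆ I and every f ∈ H: (1/2)‖KK*f‖² ≤ ‖∑_{i∈J} ⟨f,f_i⟩ f_i‖² + ‖∑_{i∈J^c} ⟨f,f_i⟩ f_i‖² ≤ 2‖K‖²‖K*f‖² − (1/2)‖KK*f‖². -/

import Mathlib

/-!
The family `F` is Bessel with bound `‖K‖²`, since `‖K* y‖ ≤ ‖K‖ ‖y‖`, and the same holds for each of
its subfamilies. By duality, synthesis satisfies `‖∑ cᵢ Fᵢ‖² ≤ ‖K‖² ∑ |cᵢ|²` for square-summable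
coefficients (`summable_smul_of_bessel`, `norm_tsum_smul_sq_le`). Polarization turns the Parseval
identity into `∑ ⟨Fᵢ, x⟩ Fᵢ = K K* x` (`tsum_eq_of_parseval`).

Let `a` and `b` be the partial sums over `J` and `Jᶜ`, so that `a + b = K K* x`. The lower bound is
`‖a + b‖² ≤ 2 (‖a‖² + ‖b‖²)`. For the upper bound, the synthesis estimate on `J` and on `Jᶜ` gives
`‖a‖² + ‖b‖² ≤ ‖K‖² ‖K* x‖²`, and `½ ‖K K* x‖² ≤ ½ ‖K‖² ‖K* x‖²`; the sum of the two is at most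
`3/2 ‖K‖² ‖K* x‖²`.
-/


/- STATEMENT 16: For a Parseval K-frame F, J ⊆ I and f ∈ H:
   (1/2)‖KK*f‖² ≤ ‖∑_J ⟨f,f_i⟩f_i‖² + ‖∑_{J^c} ⟨f,f_i⟩f_i‖²
     ≤ 2‖K‖²‖K*f‖² − (1/2)‖KK*f‖². -/

local notation "⟪" x ", " y "⟫" => @inner ℂ _ _ x y

section Bessel

variable {H : Type*} [NormedAddCommGroup H] [InnerProductSpace ℂ H] {ι : Type*}

/-- Dual form of the Bessel inequality for finite sums: pair the sum with itself and apply
Cauchy–Schwarz. -/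
lemma norm_sum_smul_sq_le {F : ι → H} {B : ℝ} (hB0 : 0 ≤ B)
    (hB : ∀ (s : Finset ι) (y : H), ∑ i ∈ s, ‖⟪F i, y⟫‖ ^ 2 ≤ B * ‖y‖ ^ 2)
    (c : ι → ℂ) (s : Finset ι) :
    ‖∑ i ∈ s, c i • F i‖ ^ 2 ≤ B * ∑ i ∈ s, ‖c i‖ ^ 2 := by
  set v := ∑ i ∈ s, c i • F i with hv
  have hc : 0 ≤ ∑ i ∈ s, ‖c i‖ ^ 2 := Finset.sum_nonneg fun i _ => by positivity
  have h1 : ‖v‖ ^ 2 ≤ ∑ i ∈ s, ‖c i‖ * ‖⟪F i, v⟫‖ := by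
    have h2 : ⟪v, v⟫ = ∑ i ∈ s, c i * ⟪v, F i⟫ := by
      conv_lhs => rw [hv, inner_sum]
      simp only [inner_smul_right, ← hv]
    calc ‖v‖ ^ 2 = ‖⟪v, v⟫‖ := by
          rw [inner_self_eq_norm_sq_to_K]; simp
      _ ≤ ∑ i ∈ s, ‖c i * ⟪v, F i⟫‖ := by rw [h2]; exact norm_sum_le _ _
      _ = _ := by simp only [norm_mul, norm_inner_symm v]
  have h3 : (‖v‖ ^ 2) ^ 2 ≤ (∑ i ∈ s, ‖c i‖ ^ 2) * (B * ‖v‖ ^ 2) :=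
    calc (‖v‖ ^ 2) ^ 2 ≤ (∑ i ∈ s, ‖c i‖ * ‖⟪F i, v⟫‖) ^ 2 := by gcongr
      _ ≤ (∑ i ∈ s, ‖c i‖ ^ 2) * ∑ i ∈ s, ‖⟪F i, v⟫‖ ^ 2 := Finset.sum_mul_sq_le_sq_mul_sq _ _ _
      _ ≤ _ := mul_le_mul_of_nonneg_left (hB s v) hc
  rcases eq_or_ne v 0 with h0 | h0
  · rw [h0]
    simpa using mul_nonneg hB0 hc
  · have : 0 < ‖v‖ ^ 2 := by positivity
    nlinarith

lemma summable_smul_of_bessel [CompleteSpace H] {F : ι → H} {B : ℝ} (hB0 : 0 ≤ B)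
    (hB : ∀ (s : Finset ι) (y : H), ∑ i ∈ s, ‖⟪F i, y⟫‖ ^ 2 ≤ B * ‖y‖ ^ 2)
    {c : ι → ℂ} (hc : Summable fun i => ‖c i‖ ^ 2) : Summable fun i => c i • F i := by
  rw [summable_iff_vanishing_norm]
  intro ε hε
  obtain ⟨s, hs⟩ := summable_iff_vanishing_norm.1 hc (ε ^ 2 / (B + 1)) (by positivity)
  refine ⟨s, fun t ht => ?_⟩
  have h1 := hs t ht
  have h2 : 0 ≤ ∑ i ∈ t, ‖c i‖ ^ 2 := Finset.sum_nonneg fun i _ => by positivity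
  rw [Real.norm_of_nonneg h2, lt_div_iff₀ (by positivity)] at h1
  have h3 := norm_sum_smul_sq_le hB0 hB c t
  exact lt_of_pow_lt_pow_left₀ 2 hε.le (by nlinarith)

lemma norm_tsum_smul_sq_le [CompleteSpace H] {F : ι → H} {B : ℝ} (hB0 : 0 ≤ B)
    (hB : ∀ (s : Finset ι) (y : H), ∑ i ∈ s, ‖⟪F i, y⟫‖ ^ 2 ≤ B * ‖y‖ ^ 2)
    {c : ι → ℂ} (hc : Summable fun i => ‖c i‖ ^ 2) :
    ‖∑' i, c i • F i‖ ^ 2 ≤ B * ∑' i, ‖c i‖ ^ 2 :=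
  le_of_tendsto_of_tendsto' ((summable_smul_of_bessel hB0 hB hc).hasSum.norm.pow 2)
    (hc.hasSum.const_mul B) fun s => norm_sum_smul_sq_le hB0 hB c s

/-- The frame operator of a Parseval `K`-frame is `K K*`: both operators have the same quadratic
form, and a complex operator is determined by its quadratic form. -/
lemma tsum_eq_of_parseval [CompleteSpace H] (K : H →L[ℂ] H) {F : ι → H}
    (hS : ∀ x : H, Summable fun i => ⟪F i, x⟫ • F i)
    (hPar : ∀ x : H, ∑' i, ‖⟪F i, x⟫‖ ^ 2 = ‖ContinuousLinearMap.adjoint K x‖ ^ 2) (x : H) :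
    ∑' i, ⟪F i, x⟫ • F i = K (ContinuousLinearMap.adjoint K x) := by
  let S : H →ₗ[ℂ] H :=
    { toFun := fun x => ∑' i, ⟪F i, x⟫ • F i
      map_add' := fun x y => by
        simp only [inner_add_right, add_smul]
        exact (hS x).tsum_add (hS y)
      map_smul' := fun r x => by
        simp only [inner_smul_right, mul_smul, RingHom.id_apply]
        exact (hS x).tsum_const_smul r }
  have hST : S = (K ∘L ContinuousLinearMap.adjoint K : H →L[ℂ] H).toLinearMap := by
    rw [← ext_inner_map]
    intro y
    rw [← inner_conj_symm, ← inner_conj_symm (_ : H) y]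
    congr 1
    have h1 : ⟪y, S y⟫ = ∑' i, ((‖⟪F i, y⟫‖ ^ 2 : ℝ) : ℂ) := by
      change innerSL ℂ y (∑' i, ⟪F i, y⟫ • F i) = _
      rw [(innerSL ℂ y).map_tsum (hS y)]
      refine tsum_congr fun i => ?_
      rw [innerSL_apply_apply, inner_smul_right, ← inner_conj_symm y (F i), Complex.mul_conj,
        Complex.normSq_eq_norm_sq]
    rw [h1, ← Complex.ofReal_tsum, hPar]
    change _ = ⟪y, K (ContinuousLinearMap.adjoint K y)⟫
    rw [← ContinuousLinearMap.adjoint_inner_left, inner_self_eq_norm_sq_to_K]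
    simp
  exact congrArg (fun T : H →ₗ[ℂ] H => T x) hST

end Bessel

theorem stmt_16
    {H : Type*} [NormedAddCommGroup H] [InnerProductSpace ℂ H] [CompleteSpace H]
    [TopologicalSpace.SeparableSpace H]
    {I : Type*} [Countable I]
    (K : H →L[ℂ] H) (F : I → H)
    -- F is a Parseval K-frame
    (hFsum : ∀ x : H, Summable fun i => ‖⟪F i, x⟫‖ ^ 2)
    (hPar : ∀ x : H, ∑' i, ‖⟪F i, x⟫‖ ^ 2 = ‖ContinuousLinearMap.adjoint K x‖ ^ 2)
    (J : Set I) (x : H) :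
    (1 / 2 : ℝ) * ‖K (ContinuousLinearMap.adjoint K x)‖ ^ 2
        ≤ ‖∑' i : J, ⟪F i, x⟫ • F i‖ ^ 2 + ‖∑' i : ↥Jᶜ, ⟪F i, x⟫ • F i‖ ^ 2 ∧
    ‖∑' i : J, ⟪F i, x⟫ • F i‖ ^ 2 + ‖∑' i : ↥Jᶜ, ⟪F i, x⟫ • F i‖ ^ 2
      ≤ 2 * ‖K‖ ^ 2 * ‖ContinuousLinearMap.adjoint K x‖ ^ 2
        - (1 / 2 : ℝ) * ‖K (ContinuousLinearMap.adjoint K x)‖ ^ 2 := by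
  have hB : ∀ (s : Finset I) (y : H), ∑ i ∈ s, ‖⟪F i, y⟫‖ ^ 2 ≤ ‖K‖ ^ 2 * ‖y‖ ^ 2 := by
    intro s y
    calc ∑ i ∈ s, ‖⟪F i, y⟫‖ ^ 2 ≤ ∑' i, ‖⟪F i, y⟫‖ ^ 2 :=
          (hFsum y).sum_le_tsum s fun i _ => by positivity
      _ = ‖ContinuousLinearMap.adjoint K y‖ ^ 2 := hPar y
      _ ≤ (‖ContinuousLinearMap.adjoint K‖ * ‖y‖) ^ 2 := by
          gcongr
          exact ContinuousLinearMap.le_opNorm _ _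
      _ = _ := by rw [LinearIsometryEquiv.norm_map, mul_pow]
  have hB0 : 0 ≤ ‖K‖ ^ 2 := by positivity
  have hS : ∀ y : H, Summable fun i => ⟪F i, y⟫ • F i := fun y =>
    summable_smul_of_bessel hB0 hB (hFsum y)
  have hsub : ∀ A : Set I, ‖∑' i : A, ⟪F i, x⟫ • F i‖ ^ 2
      ≤ ‖K‖ ^ 2 * ∑' i : A, ‖⟪F i, x⟫‖ ^ 2 := by
    intro A
    refine norm_tsum_smul_sq_le (F := fun i : A => F i) hB0 (fun s y => ?_)
      ((hFsum x).subtype A)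
    have := hB (s.map (Function.Embedding.subtype _)) y
    rwa [Finset.sum_map] at this
  have hab : ∑' i : J, ⟪F i, x⟫ • F i + ∑' i : ↥Jᶜ, ⟪F i, x⟫ • F i
      = K (ContinuousLinearMap.adjoint K x) := by
    rw [← tsum_eq_of_parseval K hS hPar x]
    exact ((hS x).subtype J).tsum_add_tsum_compl ((hS x).subtype Jᶜ)
  have hsum : ∑' i : J, ‖⟪F i, x⟫‖ ^ 2 + ∑' i : ↥Jᶜ, ‖⟪F i, x⟫‖ ^ 2
      = ‖ContinuousLinearMap.adjoint K x‖ ^ 2 := by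
    rw [← hPar x]
    exact ((hFsum x).subtype J).tsum_add_tsum_compl ((hFsum x).subtype Jᶜ)
  have hJ := hsub J
  have hJc := hsub Jᶜ
  have hK : ‖K (ContinuousLinearMap.adjoint K x)‖ ^ 2
      ≤ ‖K‖ ^ 2 * ‖ContinuousLinearMap.adjoint K x‖ ^ 2 := by
    rw [← mul_pow]
    gcongr
    exact K.le_opNorm _
  constructor
  · rw [← hab]
    have h := parallelogram_law_with_norm ℂ (∑' i : J, ⟪F i, x⟫ • F i)
      (∑' i : ↥Jᶜ, ⟪F i, x⟫ • F i)
    nlinarith [mul_self_nonneg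
      ‖∑' i : J, ⟪F i, x⟫ • F i - ∑' i : ↥Jᶜ, ⟪F i, x⟫ • F i‖]
  · have hnn : 0 ≤ ‖K‖ ^ 2 * ‖ContinuousLinearMap.adjoint K x‖ ^ 2 := by positivity
    have hadd := add_le_add hJ hJc
    rw [← mul_add, hsum] at hadd
    linarith
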